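/- There exists a state h₀ on 𝒯 that vanishes on every compact operator belonging to 𝒯 and satisfies h₀(T_{n,m}) = 1 if n = m and h₀(T_{n,m}) = 0 if n ≠ m, for all n, m ∈ ℕ; equivalently, h₀(T_{n,m}) = ∫_{S¹} z^{m−n} dμ(z) where μ is the normalized Haar (arc-length) probability measure on the unit circle S¹. -/

import Mathlib

/-- `T_{n,m} = Tⁿ (T*)ᵐ` for a bounded operator `T` on a complex Hilbert space. -/
noncomputable def Tnm {H : Type*} [NormedAddCommGroup H] [InnerProductSpace ℂ H]
    [CompleteSpace H] (T : H →L[ℂ] H) (n m : ℕ) : H →L[ℂ] H :=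
  T ^ n * (ContinuousLinearMap.adjoint T) ^ m

/-- The Toeplitz algebra: the norm-closed star-subalgebra of `B(H)` generated by `T`. -/
noncomputable def ToeplitzAlg {H : Type*} [NormedAddCommGroup H] [InnerProductSpace ℂ H]
    [CompleteSpace H] (T : H →L[ℂ] H) : StarSubalgebra ℂ (H →L[ℂ] H) :=
  StarAlgebra.elemental ℂ T

/-- The `k`-th Fourier coefficient `A_k = (1/2π) ∫₀^{2π} e^{-ikθ} U_θ A U_θ* dθ`
(a Bochner integral in `B(H)`). -/
noncomputable def opFourierCoeff {H : Type*} [NormedAddCommGroup H] [InnerProductSpace ℂ H]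
    [CompleteSpace H] (U : ℝ → H →L[ℂ] H) (A : H →L[ℂ] H) (k : ℤ) : H →L[ℂ] H :=
  (2 * Real.pi)⁻¹ • ∫ θ in (0 : ℝ)..(2 * Real.pi),
    Complex.exp (-(k : ℂ) * θ * Complex.I) • (U θ * A * ContinuousLinearMap.adjoint (U θ))

open ComplexOrder MeasureTheory

/-- The Borel σ-algebra on the unit circle. -/
noncomputable instance : MeasurableSpace Circle := borel Circle

instance : BorelSpace Circle := ⟨rfl⟩

/-- The normalized Haar (arc-length) probability measure on the unit circle. -/
noncomputable def circleHaar : Measure Circle :=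
  Measure.haarMeasure (⊤ : TopologicalSpace.PositiveCompacts Circle)

section VectorStates

open Filter Topology

variable {H : Type*} [NormedAddCommGroup H] [InnerProductSpace ℂ H]

theorem Orthonormal.norm_inner_diagonal_le {e : ℕ → H} (he : Orthonormal ℂ e)
    (A : H →L[ℂ] H) (k : ℕ) : ‖inner ℂ (e k) (A (e k))‖ ≤ ‖A‖ := by
  calc ‖inner ℂ (e k) (A (e k))‖ ≤ ‖e k‖ * ‖A (e k)‖ := norm_inner_le_norm _ _
    _ ≤ ‖e k‖ * (‖A‖ * ‖e k‖) := by gcongr; exact A.le_opNorm _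
    _ = ‖A‖ := by simp [he.norm_eq_one]

/-- Diagonal matrix coefficients of a bounded operator converge along every ultrafilter. -/
theorem exists_tendsto_inner_diagonal (U : Ultrafilter ℕ) {e : ℕ → H} (he : Orthonormal ℂ e)
    (A : H →L[ℂ] H) : ∃ l : ℂ, Tendsto (fun k ↦ inner ℂ (e k) (A (e k))) U (𝓝 l) := by
  have hmem : ∀ k, inner ℂ (e k) (A (e k)) ∈ Metric.closedBall (0 : ℂ) ‖A‖ := fun k ↦
    mem_closedBall_zero_iff.2 (he.norm_inner_diagonal_le A k)
  obtain ⟨l, -, hl⟩ := (isCompact_closedBall (0 : ℂ) ‖A‖).ultrafilter_le_nhds'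
    (U.map fun k ↦ inner ℂ (e k) (A (e k))) (Ultrafilter.mem_map.2 (Eventually.of_forall hmem))
  exact ⟨l, hl⟩

/-- The limit along an ultrafilter of the vector states of an orthonormal sequence. -/
theorem exists_clm_tendsto_inner_diagonal (U : Ultrafilter ℕ) {e : ℕ → H}
    (he : Orthonormal ℂ e) :
    ∃ φ : (H →L[ℂ] H) →L[ℂ] ℂ,
      ∀ A, Tendsto (fun k ↦ inner ℂ (e k) (A (e k))) U (𝓝 (φ A)) := by
  choose f hf using exists_tendsto_inner_diagonal U he
  let φ : (H →L[ℂ] H) →ₗ[ℂ] ℂ :=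
    { toFun := f
      map_add' := fun A B ↦ tendsto_nhds_unique (hf (A + B)) <| by
        simpa [inner_add_right] using (hf A).add (hf B)
      map_smul' := fun c A ↦ tendsto_nhds_unique (hf (c • A)) <| by
        simpa [inner_smul_right] using (hf A).const_mul c }
  refine ⟨φ.mkContinuous 1 fun A ↦ ?_, hf⟩
  rw [one_mul]
  exact le_of_tendsto (hf A).norm (Eventually.of_forall (he.norm_inner_diagonal_le A))

/-- An orthonormal sequence converges weakly to zero. -/
theorem Orthonormal.tendsto_inner_atTop_zero {e : ℕ → H} (he : Orthonormal ℂ e) (y : H) :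
    Tendsto (fun k ↦ inner ℂ (e k) y) atTop (𝓝 0) := by
  have h := (he.inner_products_summable y).tendsto_atTop_zero
  rw [tendsto_zero_iff_norm_tendsto_zero]
  simpa using h.sqrt

/-- The diagonal matrix coefficients of a compact operator vanish along free ultrafilters. -/
theorem IsCompactOperator.tendsto_inner_diagonal_zero {U : Ultrafilter ℕ}
    (hU : (U : Filter ℕ) ≤ atTop) {e : ℕ → H} (he : Orthonormal ℂ e) {A : H →L[ℂ] H}
    (hA : IsCompactOperator A) :
    Tendsto (fun k ↦ inner ℂ (e k) (A (e k))) U (𝓝 0) := by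
  have hK := IsCompactOperator.isCompact_closure_image_closedBall (𝕜₁ := ℂ)
    (f := A.toLinearMap) hA 1
  obtain ⟨y, -, hy⟩ := hK.ultrafilter_le_nhds' (U.map fun k ↦ A (e k))
    (Ultrafilter.mem_map.2 (Eventually.of_forall fun k ↦ subset_closure
      ⟨e k, by simp [he.norm_eq_one], rfl⟩))
  have hy' : Tendsto (fun k ↦ A (e k)) U (𝓝 y) := hy
  have hdiff : Tendsto (fun k ↦ inner ℂ (e k) (A (e k) - y)) U (𝓝 0) := by
    refine squeeze_zero_norm (fun k ↦ ?_) (tendsto_iff_norm_sub_tendsto_zero.1 hy')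
    simpa only [he.norm_eq_one, one_mul] using norm_inner_le_norm (𝕜 := ℂ) (e k) (A (e k) - y)
  simpa [inner_sub_right] using hdiff.add ((he.tendsto_inner_atTop_zero y).mono_left hU)

end VectorStates

section Shift

variable {H : Type*} [NormedAddCommGroup H] [InnerProductSpace ℂ H]
  {e : HilbertBasis ℕ ℂ H} {T : H →L[ℂ] H}

theorem shift_pow_apply (hT : ∀ n : ℕ, T (e n) = e (n + 1)) (n k : ℕ) :
    (T ^ n) (e k) = e (k + n) := by
  induction n with
  | zero => simp
  | succ n ih => rw [pow_succ', mul_apply_eq_comp, ih, hT, add_assoc]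

variable [CompleteSpace H]

theorem adjoint_shift_apply_succ (hT : ∀ n : ℕ, T (e n) = e (n + 1)) (k : ℕ) :
    ContinuousLinearMap.adjoint T (e (k + 1)) = e k := by
  apply e.repr.injective
  ext j
  rw [e.repr_apply_apply, e.repr_apply_apply, ContinuousLinearMap.adjoint_inner_right, hT,
    orthonormal_iff_ite.1 e.orthonormal, orthonormal_iff_ite.1 e.orthonormal]
  simp

theorem adjoint_shift_pow_apply (hT : ∀ n : ℕ, T (e n) = e (n + 1)) (m k : ℕ) :
    (ContinuousLinearMap.adjoint T ^ m) (e (k + m)) = e k := by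
  induction m with
  | zero => simp
  | succ m ih =>
    rw [pow_succ, mul_apply_eq_comp, ← add_assoc, adjoint_shift_apply_succ hT, ih]

theorem inner_Tnm_apply (hT : ∀ n : ℕ, T (e n) = e (n + 1)) (n m : ℕ) {k : ℕ} (hk : m ≤ k) :
    inner ℂ (e k) (Tnm T n m (e k)) = if n = m then (1 : ℂ) else 0 := by
  obtain ⟨j, rfl⟩ := Nat.exists_eq_add_of_le' hk
  rw [Tnm, mul_apply_eq_comp, adjoint_shift_pow_apply hT, shift_pow_apply hT,
    orthonormal_iff_ite.1 e.orthonormal]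
  simp [eq_comm]

end Shift

instance : IsProbabilityMeasure circleHaar :=
  ⟨by simpa [circleHaar] using Measure.haarMeasure_self (K₀ := (⊤ : TopologicalSpace.PositiveCompacts Circle))⟩

instance : circleHaar.IsMulLeftInvariant := by
  unfold circleHaar; infer_instance

theorem integral_zpow_circleHaar (j : ℤ) :
    ∫ z : Circle, (z : ℂ) ^ j ∂circleHaar = if j = 0 then 1 else 0 := by
  split_ifs with hj
  · simp [hj]
  · have hw : ((Circle.exp (Real.pi / j) : Circle) : ℂ) ^ j = -1 := by
      have hj' : (j : ℂ) ≠ 0 := by exact_mod_cast hj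
      rw [Circle.coe_exp, ← Complex.exp_int_mul, ← Complex.exp_pi_mul_I]
      congr 1
      push_cast
      field_simp
    have h := integral_mul_left_eq_self (μ := circleHaar) (fun z : Circle ↦ (z : ℂ) ^ j)
      (Circle.exp (Real.pi / j))
    simp only [Circle.coe_mul, mul_zpow, hw, integral_const_mul] at h
    exact self_eq_neg.1 (by simpa using h.symm)

/-- there is a state `h₀` on `𝒯` vanishing on compact operators in `𝒯` with
`h₀(T_{n,m}) = δ_{n,m}`; equivalently `h₀(T_{n,m}) = ∫_{S¹} z^{m-n} dμ` for the normalized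
Haar measure `μ` on the circle. -/
theorem exists_haar_state_on_quotient {H : Type*} [NormedAddCommGroup H]
    [InnerProductSpace ℂ H] [CompleteSpace H] (e : HilbertBasis ℕ ℂ H) (T : H →L[ℂ] H)
    (hT : ∀ n : ℕ, T (e n) = e (n + 1)) :
    ∃ h₀ : (ToeplitzAlg T) →L[ℂ] ℂ,
      (∀ a : ToeplitzAlg T, 0 ≤ h₀ (star a * a)) ∧ h₀ 1 = 1 ∧
      (∀ a : ToeplitzAlg T, IsCompactOperator (⇑(a : H →L[ℂ] H)) → h₀ a = 0) ∧
      (∀ (n m : ℕ) (hnm : Tnm T n m ∈ ToeplitzAlg T),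
        h₀ ⟨Tnm T n m, hnm⟩ = if n = m then (1 : ℂ) else 0) ∧
      (∀ (n m : ℕ) (hnm : Tnm T n m ∈ ToeplitzAlg T),
        h₀ ⟨Tnm T n m, hnm⟩ =
          ∫ z : Circle, ((z : ℂ) ^ ((m : ℤ) - (n : ℤ))) ∂circleHaar) := by
  obtain ⟨φ, hφ⟩ := exists_clm_tendsto_inner_diagonal (Filter.hyperfilter ℕ) e.orthonormal
  have hU : (Filter.hyperfilter ℕ : Filter ℕ) ≤ Filter.atTop := Nat.hyperfilter_le_atTop
  have hTnm : ∀ n m : ℕ, φ (Tnm T n m) = if n = m then (1 : ℂ) else 0 := fun n m ↦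
    tendsto_nhds_unique (hφ _) <| tendsto_const_nhds.congr' <| hU <|
      (Filter.eventually_ge_atTop m).mono fun k hk ↦ (inner_Tnm_apply hT n m hk).symm
  refine ⟨φ.comp (ToeplitzAlg T).toSubalgebra.toSubmodule.subtypeL, fun a ↦ ?_, ?_,
    fun a ha ↦ ?_, fun n m _ ↦ hTnm n m, fun n m _ ↦ ?_⟩
  · refine ge_of_tendsto (hφ (star (a : H →L[ℂ] H) * a)) (Filter.Eventually.of_forall fun k ↦ ?_)
    rw [mul_apply_eq_comp, ContinuousLinearMap.star_eq_adjoint,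
      ContinuousLinearMap.adjoint_inner_right, inner_self_eq_norm_sq_to_K,
      ← RCLike.ofReal_pow]
    exact Complex.zero_le_real.2 (sq_nonneg _)
  · change φ 1 = 1
    simpa [Tnm] using hTnm 0 0
  · exact tendsto_nhds_unique (hφ a) (ha.tendsto_inner_diagonal_zero hU e.orthonormal)
  · rw [integral_zpow_circleHaar]
    refine (hTnm n m).trans ?_
    simp [sub_eq_zero, eq_comm]
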